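/- The function B(H) = 8π·(1/(4H²−1) + (4H²/(4H²−1)^{3/2})·arctan(1/√(4H²−1))) is strictly decreasing on the interval (1/2, ∞); that is, for all H₁, H₂ with 1/2 < H₁ < H₂ one has B(H₂) < B(H₁). -/

import Mathlib

open Real Set

/-- Hsiang–Hsiang's formula for the area of the rotational CMC sphere of mean
curvature `H` in `H² × ℝ`. -/
noncomputable def hsiangArea (H : ℝ) : ℝ :=
  8 * Real.pi * (1 / (4 * H ^ 2 - 1) +
    (4 * H ^ 2 / (4 * H ^ 2 - 1) ^ ((3 : ℝ) / 2)) *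
      Real.arctan (1 / Real.sqrt (4 * H ^ 2 - 1)))

/-!
In the variable `x = 4 * H ^ 2 - 1 > 0` the numerator `4 * H ^ 2` becomes `x + 1`, and the area is,
up to a positive constant, `1 / x + (x + 1) / x ^ (3 / 2) * arctan (1 / √x)`. No derivative is
needed: `(x + 1) / x ^ (3 / 2)` is a sum of two negative powers of `x`, so the positive quantities
`1 / x`, `(x + 1) / x ^ (3 / 2)` and `arctan (1 / √x)` all decrease in `x`.
-/

theorem strictAntiOn_add_const_div_rpow {c p : ℝ} (hc : 0 < c) (hp : 1 ≤ p) :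
    StrictAntiOn (fun x : ℝ ↦ (x + c) / x ^ p) (Ioi 0) := by
  have split_powers : EqOn (fun x : ℝ ↦ x ^ (1 - p) + c * x ^ (-p))
      (fun x ↦ (x + c) / x ^ p) (Ioi 0) := fun x (hx : 0 < x) ↦ by
    simp only [rpow_sub hx, rpow_one, rpow_neg hx.le, add_div, div_eq_mul_inv c]
  have first_antitone : AntitoneOn (fun x : ℝ ↦ x ^ (1 - p)) (Ioi 0) :=
    antitoneOn_rpow_Ioi_of_exponent_nonpos (by linarith)
  have second_strictAnti : StrictAntiOn (fun x : ℝ ↦ c * x ^ (-p)) (Ioi 0) :=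
    (strictMono_mul_left_of_pos hc).comp_strictAntiOn
      (strictAntiOn_rpow_Ioi_of_exponent_neg (by linarith))
  exact (first_antitone.add_strictAnti second_strictAnti).congr split_powers

theorem strictAntiOn_arctan_one_div_sqrt :
    StrictAntiOn (fun x : ℝ ↦ arctan (1 / √x)) (Ioi 0) :=
  arctan_strictMono.comp_strictAntiOn <|
    one_div_strictAntiOn.comp_strictMonoOn (strictMonoOn_sqrt.mono Ioi_subset_Ici_self)
      fun _ hx ↦ sqrt_pos.mpr hx

/-- The area of the rotational sphere of mean curvature `H`, divided by `8 * π`, as a function of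
`x = 4 * H ^ 2 - 1`. -/
noncomputable def reducedHsiangArea (x : ℝ) : ℝ :=
  1 / x + (x + 1) / x ^ (3 / 2 : ℝ) * arctan (1 / √x)

theorem hsiangArea_eq_reducedHsiangArea (H : ℝ) :
    hsiangArea H = 8 * π * reducedHsiangArea (4 * H ^ 2 - 1) := by
  simp only [hsiangArea, reducedHsiangArea, sub_add_cancel]

theorem reducedHsiangArea_strictAntiOn : StrictAntiOn reducedHsiangArea (Ioi 0) := by
  refine one_div_strictAntiOn.add fun x (hx : 0 < x) y (hy : 0 < y) hxy ↦ ?_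
  have hquot : (y + 1) / y ^ (3 / 2 : ℝ) < (x + 1) / x ^ (3 / 2 : ℝ) :=
    strictAntiOn_add_const_div_rpow one_pos (by norm_num) hx hy hxy
  have harctan : arctan (1 / √y) < arctan (1 / √x) :=
    strictAntiOn_arctan_one_div_sqrt hx hy hxy
  exact mul_lt_mul'' hquot harctan (by positivity) (arctan_nonneg.mpr (by positivity))

/-- `B` is strictly decreasing on `(1/2, ∞)`. -/
theorem hsiangArea_strictAnti :
    ∀ H₁ H₂ : ℝ, 1 / 2 < H₁ → H₁ < H₂ → hsiangArea H₂ < hsiangArea H₁ := by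
  intro H₁ H₂ hH₁ hH
  have hpos : 0 < 4 * H₁ ^ 2 - 1 := by nlinarith
  have hlt : 4 * H₁ ^ 2 - 1 < 4 * H₂ ^ 2 - 1 := by nlinarith
  rw [hsiangArea_eq_reducedHsiangArea, hsiangArea_eq_reducedHsiangArea]
  exact mul_lt_mul_of_pos_left
    (reducedHsiangArea_strictAntiOn hpos (hpos.trans hlt) hlt) (by positivity)
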